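/- There exists a constant C > 0 such that for every R with 0 < R < e^{-1}, setting p := 2 + 1/|log R| (where |log R| = −log R > 1), one has ‖K_R‖_p ≤ C √(|log R|). -/

import Mathlib

noncomputable section
open MeasureTheory ENNReal
open scoped RealInnerProductSpace

/-- The plane `ℝ²`. -/
abbrev E2 : Type := EuclideanSpace ℝ (Fin 2)

/-- The rotation by 90 degrees: `x^⊥ = (-x₂, x₁)`. -/
def perp (x : E2) : E2 := (WithLp.equiv 2 (Fin 2 → ℝ)).symm ![-(x 1), x 0]

/-- The Aharonov–Bohm kernel `K_R(x) = x^⊥ / (max R ‖x‖)²` (with `K_R 0 = 0`,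
also when `R = 0`, by the junk-value convention `(0 : ℝ)⁻¹ = 0`). -/
def K (R : ℝ) (x : E2) : E2 := ((max R ‖x‖) ^ 2)⁻¹ • perp x

/-- The standard basis of `ℝ²`. -/
def e2 (j : Fin 2) : E2 := EuclideanSpace.single j 1

/-- Componentwise convolution of the vector kernel `K_R` with a scalar density. -/
def convKs (R : ℝ) (ρ : E2 → ℝ) (x : E2) : E2 := ∫ y, ρ y • K R (x - y)

/-- Convolution of the vector kernel `K_R` with a vector field, summed over components. -/
def convKv (R : ℝ) (F : E2 → E2) (x : E2) : ℝ := ∫ y, ⟪K R (x - y), F y⟫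

/-- The current `J[u] = i(u∇ū - ū∇u) = 2 Im(ū ∇u)`, an `ℝ²`-valued function. -/
def Jf (u : E2 → ℂ) (x : E2) : E2 :=
  (WithLp.equiv 2 (Fin 2 → ℝ)).symm fun j =>
    2 * ((starRingEnd ℂ) (u x) * fderiv ℝ u x (e2 j)).im

/-- The `H¹` norm `(‖u‖₂² + ‖∇u‖₂²)^{1/2}` (extended-real valued). -/
def H1 (u : E2 → ℂ) : ℝ≥0∞ :=
  (eLpNorm u 2 volume ^ 2 + eLpNorm (fun x => fderiv ℝ u x) 2 volume ^ 2) ^ (1 / 2 : ℝ)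

/-- The `H²` norm `(‖u‖₂² + ‖∇u‖₂² + ‖∇²u‖₂²)^{1/2}` (extended-real valued). -/
def H2 (u : E2 → ℂ) : ℝ≥0∞ :=
  (eLpNorm u 2 volume ^ 2 + eLpNorm (fun x => fderiv ℝ u x) 2 volume ^ 2
    + eLpNorm (fun x => fderiv ℝ (fderiv ℝ u) x) 2 volume ^ 2) ^ (1 / 2 : ℝ)

/-!
The bound `‖K_R(x)‖ ≤ (max R ‖x‖)⁻¹` reduces the claim to a radial integral: in dimension `d < p`
polar coordinates give
`∫ (max R ‖x‖)^(-p) = |B| R^(d-p) p / (p - d)`,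
where `B` is the unit ball. For `d = 2` and `p = 2 + 1/|log R|` the power `R^(2-p)` is exactly `e`,
while `p / (p - 2) = 2 |log R| + 1`. Thus `‖K_R‖_p^p` is at most a multiple of `|log R|`, and since
`p ≥ 2` its `p`-th root is at most a multiple of `√|log R|`.
-/

section RadialIntegral

open Set

variable {R p : ℝ} (k : ℕ)

lemma eqOn_pow_mul_max_rpow_Ioc :
    EqOn (fun y : ℝ ↦ y ^ k * max R y ^ (-p)) (fun y ↦ y ^ k * R ^ (-p)) (Ioc 0 R) :=
  fun y hy ↦ by simp only [max_eq_left hy.2]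

lemma eqOn_pow_mul_max_rpow_Ioi (hR : 0 ≤ R) :
    EqOn (fun y : ℝ ↦ y ^ k * max R y ^ (-p)) (fun y ↦ y ^ (k - p)) (Ioi R) := by
  intro y (hy : R < y)
  simp only [max_eq_right hy.le, sub_eq_add_neg, Real.rpow_add (hR.trans_lt hy),
    Real.rpow_natCast]

lemma integrableOn_pow_mul_max_rpow_Ioc :
    IntegrableOn (fun y : ℝ ↦ y ^ k * max R y ^ (-p)) (Ioc 0 R) := by
  rw [integrableOn_congr_fun (eqOn_pow_mul_max_rpow_Ioc k) measurableSet_Ioc]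
  exact Continuous.integrableOn_Ioc (by fun_prop)

lemma integrableOn_pow_mul_max_rpow_Ioi (hR : 0 < R) (hp : k + 1 < p) :
    IntegrableOn (fun y : ℝ ↦ y ^ k * max R y ^ (-p)) (Ioi R) := by
  rw [integrableOn_congr_fun (eqOn_pow_mul_max_rpow_Ioi k hR.le) measurableSet_Ioi]
  exact integrableOn_Ioi_rpow_of_lt (by linarith) hR

lemma integrableOn_pow_mul_max_rpow (hR : 0 < R) (hp : k + 1 < p) :
    IntegrableOn (fun y : ℝ ↦ y ^ k * max R y ^ (-p)) (Ioi 0) := by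
  rw [← Ioc_union_Ioi_eq_Ioi hR.le]
  exact (integrableOn_pow_mul_max_rpow_Ioc k).union (integrableOn_pow_mul_max_rpow_Ioi k hR hp)

lemma setIntegral_Ioc_pow_mul_max_rpow (hR : 0 < R) :
    ∫ y in Ioc 0 R, y ^ k * max R y ^ (-p) = R ^ (k + 1 - p) / (k + 1) := by
  rw [setIntegral_congr_fun measurableSet_Ioc (eqOn_pow_mul_max_rpow_Ioc k),
    ← intervalIntegral.integral_of_le hR.le, intervalIntegral.integral_mul_const, integral_pow,
    sub_eq_add_neg _ p, Real.rpow_add hR, Real.rpow_add_one hR.ne', Real.rpow_natCast]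
  ring

lemma setIntegral_Ioi_pow_mul_max_rpow (hR : 0 < R) (hp : k + 1 < p) :
    ∫ y in Ioi R, y ^ k * max R y ^ (-p) = R ^ (k + 1 - p) / (p - (k + 1)) := by
  rw [setIntegral_congr_fun measurableSet_Ioi (eqOn_pow_mul_max_rpow_Ioi k hR.le),
    integral_Ioi_rpow_of_lt (by linarith) hR, sub_add_eq_add_sub, ← neg_div_neg_eq, neg_neg,
    neg_sub]

lemma integral_pow_mul_max_rpow (hR : 0 < R) (hp : k + 1 < p) :
    ∫ y in Ioi 0, y ^ k * max R y ^ (-p) =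
      R ^ (k + 1 - p) * (p / ((k + 1) * (p - (k + 1)))) := by
  have hp' : p - (k + 1) ≠ 0 := by linarith
  rw [← Ioc_union_Ioi_eq_Ioi hR.le,
    setIntegral_union (Ioc_disjoint_Ioi le_rfl) measurableSet_Ioi
      (integrableOn_pow_mul_max_rpow_Ioc k) (integrableOn_pow_mul_max_rpow_Ioi k hR hp),
    setIntegral_Ioc_pow_mul_max_rpow k hR, setIntegral_Ioi_pow_mul_max_rpow k hR hp]
  field_simp
  ring

end RadialIntegral

lemma norm_inv_rpow {a : ℝ} (ha : 0 ≤ a) (p : ℝ) : ‖a⁻¹‖ ^ p = a ^ (-p) := by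
  rw [norm_inv, Real.norm_of_nonneg ha, Real.inv_rpow ha, Real.rpow_neg ha]

section TruncatedInverseNorm

open Metric Module

variable {E : Type*} [NormedAddCommGroup E] [NormedSpace ℝ E] [FiniteDimensional ℝ E]
  [Nontrivial E] [MeasurableSpace E] [BorelSpace E] (μ : Measure E) [μ.IsAddHaarMeasure]
  {R p : ℝ}

lemma integrable_max_norm_rpow (hR : 0 < R) (hp : finrank ℝ E < p) :
    Integrable (fun x : E ↦ max R ‖x‖ ^ (-p)) μ := by
  obtain ⟨k, hk⟩ := Nat.exists_eq_succ_of_ne_zero (finrank_pos (R := ℝ) (M := E)).ne'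
  rw [hk, Nat.cast_succ] at hp
  simpa [integrable_fun_norm_addHaar μ (f := fun r ↦ max R r ^ (-p)), hk]
    using integrableOn_pow_mul_max_rpow k hR hp

lemma integral_max_norm_rpow (hR : 0 < R) (hp : finrank ℝ E < p) :
    ∫ x : E, max R ‖x‖ ^ (-p) ∂μ =
      μ.real (ball 0 1) * R ^ (finrank ℝ E - p) * (p / (p - finrank ℝ E)) := by
  obtain ⟨k, hk⟩ := Nat.exists_eq_succ_of_ne_zero (finrank_pos (R := ℝ) (M := E)).ne'
  rw [hk, Nat.cast_succ] at hp
  have hp' : p - (k + 1) ≠ 0 := by linarith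
  rw [integral_fun_norm_addHaar μ fun r ↦ max R r ^ (-p)]
  simp only [hk, Nat.succ_eq_add_one, Nat.add_sub_cancel, smul_eq_mul, nsmul_eq_mul,
    Nat.cast_succ, integral_pow_mul_max_rpow k hR hp]
  field_simp

theorem eLpNorm_inv_max_norm (hR : 0 < R) (hp : finrank ℝ E < p) :
    eLpNorm (fun x : E ↦ (max R ‖x‖)⁻¹) (ENNReal.ofReal p) μ =
      ENNReal.ofReal
        ((μ.real (ball 0 1) * R ^ (finrank ℝ E - p) * (p / (p - finrank ℝ E))) ^ p⁻¹) := by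
  have hp0 : 0 < p := (Nat.cast_nonneg _).trans_lt hp
  have hne : ENNReal.ofReal p ≠ 0 := (ENNReal.ofReal_pos.2 hp0).ne'
  have hpos (x : E) : 0 < max R ‖x‖ := lt_max_of_lt_left hR
  have hpow (x : E) : ‖(max R ‖x‖)⁻¹‖ ^ p = max R ‖x‖ ^ (-p) := norm_inv_rpow (hpos x).le p
  have hcont : Continuous fun x : E ↦ (max R ‖x‖)⁻¹ :=
    (continuous_const.max continuous_norm).inv₀ fun x ↦ (hpos x).ne'
  have hmem : MemLp (fun x : E ↦ (max R ‖x‖)⁻¹) (ENNReal.ofReal p) μ := by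
    rw [← integrable_norm_rpow_iff hcont.aestronglyMeasurable hne ENNReal.ofReal_ne_top]
    simpa only [ENNReal.toReal_ofReal hp0.le, hpow] using integrable_max_norm_rpow μ hR hp
  simp only [hmem.eLpNorm_eq_integral_rpow_norm hne ENNReal.ofReal_ne_top,
    ENNReal.toReal_ofReal hp0.le, hpow, integral_max_norm_rpow μ hR hp]

end TruncatedInverseNorm

lemma norm_perp (x : E2) : ‖perp x‖ = ‖x‖ := by
  simp [perp, EuclideanSpace.norm_eq, Fin.sum_univ_two, add_comm]

lemma norm_K_le (R : ℝ) (x : E2) : ‖K R x‖ ≤ (max R ‖x‖)⁻¹ := by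
  calc ‖K R x‖ = (max R ‖x‖ ^ 2)⁻¹ * ‖x‖ := by
        rw [K, norm_smul, norm_perp, Real.norm_of_nonneg (by positivity)]
    _ ≤ (max R ‖x‖ ^ 2)⁻¹ * max R ‖x‖ := by gcongr; exact le_max_right _ _
    _ = (max R ‖x‖)⁻¹ := by
        simpa only [sq, mul_inv, inv_inv] using mul_self_mul_inv (max R ‖x‖)⁻¹

theorem eLpNorm_K_le {R p : ℝ} (hR : 0 < R) (hp : 2 < p) :
    eLpNorm (K R) (ENNReal.ofReal p) volume ≤
      ENNReal.ofReal ((Real.pi * R ^ (2 - p) * (p / (p - 2))) ^ p⁻¹) := by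
  have hfinrank : Module.finrank ℝ E2 = 2 := finrank_euclideanSpace_fin
  have hball : (volume : Measure E2).real (Metric.ball 0 1) = Real.pi := by
    simp [Measure.real, Real.pi_nonneg]
  calc eLpNorm (K R) (ENNReal.ofReal p) volume
      ≤ eLpNorm (fun x : E2 ↦ (max R ‖x‖)⁻¹) (ENNReal.ofReal p) volume :=
        eLpNorm_mono_real (norm_K_le R)
    _ = ENNReal.ofReal ((Real.pi * R ^ (2 - p) * (p / (p - 2))) ^ p⁻¹) := by
        simpa only [hfinrank, hball, Nat.cast_ofNat] using
          eLpNorm_inv_max_norm (volume : Measure E2) hR (by rw [hfinrank]; exact_mod_cast hp)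

theorem eLpNorm_K_two_add_one_div_neg_log_le {R : ℝ} (hR : 0 < R) (hR1 : R < 1) :
    eLpNorm (K R) (ENNReal.ofReal (2 + 1 / (-Real.log R))) volume ≤
      ENNReal.ofReal
        ((Real.pi * Real.exp 1 * (2 * (-Real.log R) + 1)) ^ (2 + 1 / (-Real.log R))⁻¹) := by
  have hL : 0 < -Real.log R := neg_pos.2 (Real.log_neg hR hR1)
  have hpow : R ^ (2 - (2 + 1 / (-Real.log R))) = Real.exp 1 := by
    rw [sub_add_cancel_left, one_div, inv_neg, neg_neg, Real.rpow_inv_log hR hR1.ne]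
  have hratio : (2 + 1 / (-Real.log R)) / (2 + 1 / (-Real.log R) - 2) = 2 * (-Real.log R) + 1 := by
    rw [add_sub_cancel_left, add_div, div_self (by positivity), div_div_eq_mul_div, div_one]
  rw [← hpow, ← hratio]
  exact eLpNorm_K_le hR (lt_add_of_pos_right 2 (by positivity))

lemma rpow_inv_le_sqrt {a p : ℝ} (ha : 1 ≤ a) (hp : 2 ≤ p) : a ^ p⁻¹ ≤ √a := by
  rw [Real.sqrt_eq_rpow, one_div]
  exact Real.rpow_le_rpow_of_exponent_le ha (inv_anti₀ two_pos hp)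

/-- Corollary 2.4: there is `C > 0` such that for all `0 < R < e⁻¹`, with
`p = 2 + 1/|log R|` one has `‖K_R‖_p ≤ C √|log R|`. -/
theorem statement4 :
    ∃ C : ℝ, 0 < C ∧ ∀ R : ℝ, 0 < R → R < Real.exp (-1) →
      eLpNorm (K R) (ENNReal.ofReal (2 + 1 / (-Real.log R))) volume
        ≤ ENNReal.ofReal (C * Real.sqrt (-Real.log R)) := by
  refine ⟨√(3 * Real.pi * Real.exp 1), by positivity, fun R hR hRe ↦ ?_⟩
  have hR1 : R < 1 := hRe.trans (Real.exp_lt_one_iff.2 neg_one_lt_zero)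
  set L := -Real.log R
  have hL : 1 < L := lt_neg_of_lt_neg ((Real.log_lt_iff_lt_exp hR).2 hRe)
  have hp : 2 ≤ 2 + 1 / L := le_add_of_nonneg_right (by positivity)
  have hone : 1 ≤ 3 * Real.pi * Real.exp 1 * L := by
    have hpi : 1 ≤ 3 * Real.pi := by linarith [Real.pi_gt_three]
    exact one_le_mul_of_one_le_of_one_le
      (one_le_mul_of_one_le_of_one_le hpi (Real.one_le_exp zero_le_one)) hL.le
  refine (eLpNorm_K_two_add_one_div_neg_log_le hR hR1).trans (ENNReal.ofReal_le_ofReal ?_)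
  calc (Real.pi * Real.exp 1 * (2 * L + 1)) ^ (2 + 1 / L)⁻¹
      ≤ (Real.pi * Real.exp 1 * (3 * L)) ^ (2 + 1 / L)⁻¹ := by gcongr; linarith
    _ = (3 * Real.pi * Real.exp 1 * L) ^ (2 + 1 / L)⁻¹ := by ring_nf
    _ ≤ √(3 * Real.pi * Real.exp 1 * L) := rpow_inv_le_sqrt hone hp
    _ = √(3 * Real.pi * Real.exp 1) * √L := Real.sqrt_mul (by positivity) L
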